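/- Let A be a finite or infinite matrix with entries from ℚ, each row having only finitely many nonzero entries. If A is kernel partition regular, then J(A) is a left ideal of the semigroup (βℕ,·); that is, J(A) ≠ ∅ and for every p ∈ βℕ and every q ∈ J(A), p·q ∈ J(A). -/

import Mathlib

/- `ℕ+` plays the role of the paper's `ℕ = {1,2,3,…}`.  `Ultrafilter ℕ+` is `βℕ`. -/

/-- Product of ultrafilters: `U ∈ umul p q ↔ {x | {y | x*y ∈ U} ∈ q} ∈ p`. -/
def umul (p q : Ultrafilter ℕ+) : Ultrafilter ℕ+ :=
  p.bind fun x => q.map fun y => x * y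

/-- Sum of ultrafilters: `U ∈ uadd p q ↔ {x | {y | x+y ∈ U} ∈ q} ∈ p`. -/
def uadd (p q : Ultrafilter ℕ+) : Ultrafilter ℕ+ :=
  p.bind fun x => q.map fun y => x + y

/-- `A` is kernel partition regular: for every finite coloring of `ℕ` there is a
monochromatic vector `x` with `Ax = 0`. -/
def KPR {ι κ : Type} (A : ι → κ → ℚ) : Prop :=
  ∀ (r : ℕ) (c : ℕ+ → Fin r), ∃ (k : Fin r) (x : κ → ℕ+),
    (∀ j, c (x j) = k) ∧ ∀ i, ∑ᶠ j, A i j * ((x j : ℕ) : ℚ) = 0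

/-- `J(A) = {p ∈ βℕ : for every P ∈ p there is x with all entries in P and Ax = 0}`. -/
def JSet {ι κ : Type} (A : ι → κ → ℚ) : Set (Ultrafilter ℕ+) :=
  {p | ∀ P ∈ p, ∃ x : κ → ℕ+,
    (∀ j, x j ∈ P) ∧ ∀ i, ∑ᶠ j, A i j * ((x j : ℕ) : ℚ) = 0}

/-! If `J(A)` were empty, every `p ∈ βℕ` would have a member `P` containing the entries of no
solution of `Ax = 0`. By compactness of `βℕ` finitely many of these `P` cover `ℕ`, and colouring
each number by one that contains it contradicts partition regularity.

For the ideal property, if `P ∈ p · q` then `a⁻¹P ∈ q` for some `a`; since `Ax = 0` is homogeneous,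
multiplying by `a` a solution with entries in `a⁻¹P` gives one with entries in `P`. -/

section PartitionRegular

variable {α β : Type*} {𝓢 : Set (Set α)}

/-- A family of sets is partition regular if every finite colouring of the ambient type has a
monochromatic member of the family. Colours are taken in `Fin r`, as in `KPR`. -/
def IsPartitionRegular (𝓢 : Set (Set α)) : Prop :=
  ∀ (r : ℕ) (c : α → Fin r), ∃ k, ∃ S ∈ 𝓢, S ⊆ c ⁻¹' {k}

/-- The ultrafilters all of whose members include a set of the family `𝓢`; this is `J(A)` when
`𝓢` consists of the sets of entries of the solutions of `Ax = 0`. -/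
def witnessUltrafilters (𝓢 : Set (Set α)) : Set (Ultrafilter α) :=
  {p | ∀ P ∈ p, ∃ S ∈ 𝓢, S ⊆ P}

theorem IsPartitionRegular.exists_subset_of_iUnion_eq_univ [Finite β]
    (h𝓢 : IsPartitionRegular 𝓢) {P : β → Set α} (hP : ⋃ b, P b = Set.univ) :
    ∃ b, ∃ S ∈ 𝓢, S ⊆ P b := by
  obtain ⟨r, ⟨e⟩⟩ := Finite.exists_equiv_fin β
  choose color hcolor using Set.iUnion_eq_univ_iff.mp hP
  obtain ⟨k, S, hS, hSk⟩ := h𝓢 r (e ∘ color)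
  refine ⟨e.symm k, S, hS, fun x hx => ?_⟩
  have hxk : color x = e.symm k := e.eq_symm_apply.mpr (hSk hx)
  exact hxk ▸ hcolor x

theorem IsPartitionRegular.nonempty_witnessUltrafilters (h𝓢 : IsPartitionRegular 𝓢) :
    (witnessUltrafilters 𝓢).Nonempty := by
  by_contra hempty
  have hbad : ∀ p : Ultrafilter α, ∃ P ∈ p, ∀ S ∈ 𝓢, ¬S ⊆ P := by
    simpa [Set.Nonempty, witnessUltrafilters] using hempty
  choose P hPmem hP using hbad
  obtain ⟨t, ht⟩ := CompactSpace.elim_nhds_subcover (fun p => {q : Ultrafilter α | P p ∈ q})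
    fun p => (ultrafilter_isOpen_basic (P p)).mem_nhds (hPmem p)
  have hcover : ⋃ p : t, P p = Set.univ := by
    refine Set.iUnion_eq_univ_iff.mpr fun x => ?_
    have hx : pure x ∈ ⋃ p ∈ t, {q : Ultrafilter α | P p ∈ q} := ht ▸ Set.mem_univ _
    simpa using hx
  obtain ⟨p, S, hS, hSP⟩ := h𝓢.exists_subset_of_iUnion_eq_univ hcover
  exact hP p S hS hSP

end PartitionRegular

section Product

open scoped Pointwise

attribute [local instance] Ultrafilter.mul

variable {M : Type*} [Mul M]

theorem mul_mem_witnessUltrafilters {𝓢 : Set (Set M)} (h𝓢 : ∀ a : M, ∀ S ∈ 𝓢, a • S ∈ 𝓢)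
    (p : Ultrafilter M) {q : Ultrafilter M} (hq : q ∈ witnessUltrafilters 𝓢) :
    p * q ∈ witnessUltrafilters 𝓢 := by
  intro P hP
  have hmul : ∀ᶠ a in p, ∀ᶠ y in q, a * y ∈ P := (Ultrafilter.eventually_mul p q (· ∈ P)).mp hP
  obtain ⟨a, ha⟩ := hmul.exists
  obtain ⟨S, hS, hSP⟩ := hq _ ha
  exact ⟨a • S, h𝓢 a S hS, Set.image_subset_iff.mpr hSP⟩

variable {R ι κ : Type*} [NonUnitalCommSemiring R]

/-- The sets of entries of the solutions of `Ax = 0`, where the unknowns range over a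
multiplicative structure `M` and are read in the coefficient semiring through `φ`. -/
def kernelEntrySets (φ : M →ₙ* R) (A : ι → κ → R) : Set (Set M) :=
  {S | ∃ x : κ → M, Set.range x = S ∧ ∀ i, ∑ᶠ j, A i j * φ (x j) = 0}

theorem smul_mem_kernelEntrySets (φ : M →ₙ* R) {A : ι → κ → R}
    (hrow : ∀ i, {j | A i j ≠ 0}.Finite) (a : M) {S : Set M} (hS : S ∈ kernelEntrySets φ A) :
    a • S ∈ kernelEntrySets φ A := by
  obtain ⟨x, rfl, hx⟩ := hS
  refine ⟨fun j => a * x j, Set.range_comp (a * ·) x, fun i => ?_⟩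
  have hfin : (Function.support fun j => A i j * φ (x j)).Finite :=
    (hrow i).subset fun _ hj => left_ne_zero_of_mul hj
  calc ∑ᶠ j, A i j * φ (a * x j)
      = ∑ᶠ j, φ a * (A i j * φ (x j)) := by simp only [map_mul, mul_left_comm]
    _ = φ a * ∑ᶠ j, A i j * φ (x j) := (mul_finsum' _ _ hfin).symm
    _ = 0 := by rw [hx i, mul_zero]

theorem stmt_6_general (φ : M →ₙ* R) (A : ι → κ → R) (hrow : ∀ i, {j | A i j ≠ 0}.Finite)
    (hA : IsPartitionRegular (kernelEntrySets φ A)) :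
    (witnessUltrafilters (kernelEntrySets φ A)).Nonempty ∧
      ∀ (p : Ultrafilter M), ∀ q ∈ witnessUltrafilters (kernelEntrySets φ A),
        p * q ∈ witnessUltrafilters (kernelEntrySets φ A) :=
  ⟨hA.nonempty_witnessUltrafilters, fun p _ hq =>
    mul_mem_witnessUltrafilters (fun a _ hS => smul_mem_kernelEntrySets φ hrow a hS) p hq⟩

theorem umul_eq_mul (p q : Ultrafilter ℕ+) : umul p q = p * q := rfl

end Product

/-- The inclusion `ℕ+ → ℚ` as a multiplicative map, for `kernelEntrySets`. The double cast matches
the one in `KPR` and `JSet`. -/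
def pnatCastHom : ℕ+ →ₙ* ℚ where
  toFun n := ((n : ℕ) : ℚ)
  map_mul' := by simp

theorem kpr_iff_isPartitionRegular {ι κ : Type} {A : ι → κ → ℚ} :
    KPR A ↔ IsPartitionRegular (kernelEntrySets pnatCastHom A) := by
  simp [KPR, IsPartitionRegular, kernelEntrySets, pnatCastHom, Set.range_subset_iff, and_comm]

theorem jSet_eq_witnessUltrafilters {ι κ : Type} (A : ι → κ → ℚ) :
    JSet A = witnessUltrafilters (kernelEntrySets pnatCastHom A) := by
  simp [JSet, witnessUltrafilters, kernelEntrySets, pnatCastHom, Set.range_subset_iff, and_comm]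

/-- Lemma 2.8(a): if the (finite or infinite) row-finite matrix `A`
with rational entries is kernel partition regular, then `J(A)` is a left ideal of
`(βℕ,·)`. -/
theorem stmt_6 {ι κ : Type} (A : ι → κ → ℚ)
    (hrow : ∀ i, {j | A i j ≠ 0}.Finite) (hA : KPR A) :
    (JSet A).Nonempty ∧
      ∀ (p : Ultrafilter ℕ+), ∀ q ∈ JSet A, umul p q ∈ JSet A := by
  simpa only [jSet_eq_witnessUltrafilters, umul_eq_mul] using
    stmt_6_general pnatCastHom A hrow (kpr_iff_isPartitionRegular.mp hA)
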